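/- arXiv:1602.03250 — 5 statements merged into one kernel-verified Lean document; each statement's English description precedes it below -/
import Mathlib

section
/- Let M be a right P-module admitting two projective bases ((m_i)_{i=1}^s, (α_i)_{i=1}^s) and ((n_j)_{j=1}^t, (β_j)_{j=1}^t). Then for every endomorphism T of M as a right P-module, φ(Σ_{i=1}^s α_i(T(m_i))) = φ(Σ_{j=1}^t β_j(T(n_j))); that is, the pseudotrace φ_M(T) does not depend on the choice of projective basis of M. -/
open MulOpposite

/-!
Expanding `T (m i)` in the second basis and `n j` in the first turns the two pseudotraces into the
double sums of `φ (α i (n j) * β j (T (m i)))` and `φ (β j (T (m i)) * α i (n j))`, which agree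
because `φ` is symmetric. The same computation for maps `f : M → N` and `g : N → M` shows that the
pseudotraces of `g ∘ f` and `f ∘ g` agree; independence of the basis is the case `g = id`.
-/

section Pseudotrace

variable {P A M N ι κ : Type*} [Semiring P] [AddCommMonoid A] [Fintype ι] [Fintype κ]
  [AddCommMonoid M] [Module Pᵐᵒᵖ M] [AddCommMonoid N] [Module Pᵐᵒᵖ N]

/-- A finite projective basis (dual basis) of a right `P`-module, encoded as a left
`Pᵐᵒᵖ`-module: `op p • x` stands for `x · p`. -/
def IsProjectiveBasis (m : ι → M) (α : ι → M →ₗ[Pᵐᵒᵖ] P) : Prop :=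
  ∀ x, x = ∑ i, op (α i x) • m i

/-- The pseudotrace `φ_M(T)` relative to a projective basis `(m, α)`, with the symmetric linear
function `φ` encoded as an additive map into any commutative monoid. -/
def pseudotrace (φ : P →+ A) (m : ι → M) (α : ι → M →ₗ[Pᵐᵒᵖ] P) (T : M →ₗ[Pᵐᵒᵖ] M) : A :=
  φ (∑ i, α i (T (m i)))

theorem IsProjectiveBasis.apply_eq_sum_mul {m : ι → M} {α : ι → M →ₗ[Pᵐᵒᵖ] P}
    (h : IsProjectiveBasis m α) (γ : M →ₗ[Pᵐᵒᵖ] P) (x : M) :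
    γ x = ∑ i, γ (m i) * α i x := by
  conv_lhs => rw [h x]
  simp only [map_sum, map_smul, op_smul_eq_mul]

theorem pseudotrace_comp_eq_sum (φ : P →+ A) (m : ι → M) (α : ι → M →ₗ[Pᵐᵒᵖ] P)
    {n : κ → N} {β : κ → N →ₗ[Pᵐᵒᵖ] P} (hnβ : IsProjectiveBasis n β)
    (g : N →ₗ[Pᵐᵒᵖ] M) (f : M →ₗ[Pᵐᵒᵖ] N) :
    pseudotrace φ m α (g ∘ₗ f) = ∑ i, ∑ j, φ (α i (g (n j)) * β j (f (m i))) := by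
  have expand (i : ι) : α i (g (f (m i))) = ∑ j, α i (g (n j)) * β j (f (m i)) :=
    hnβ.apply_eq_sum_mul (α i ∘ₗ g) (f (m i))
  simp only [pseudotrace, LinearMap.comp_apply, expand, map_sum]

theorem pseudotrace_comp_comm (φ : P →+ A) (hφ : ∀ p q, φ (p * q) = φ (q * p))
    {m : ι → M} {α : ι → M →ₗ[Pᵐᵒᵖ] P} (hmα : IsProjectiveBasis m α)
    {n : κ → N} {β : κ → N →ₗ[Pᵐᵒᵖ] P} (hnβ : IsProjectiveBasis n β)
    (g : N →ₗ[Pᵐᵒᵖ] M) (f : M →ₗ[Pᵐᵒᵖ] N) :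
    pseudotrace φ m α (g ∘ₗ f) = pseudotrace φ n β (f ∘ₗ g) :=
  calc
    pseudotrace φ m α (g ∘ₗ f) = ∑ i, ∑ j, φ (α i (g (n j)) * β j (f (m i))) :=
      pseudotrace_comp_eq_sum φ m α hnβ g f
    _ = ∑ j, ∑ i, φ (α i (g (n j)) * β j (f (m i))) := Finset.sum_comm
    _ = ∑ j, ∑ i, φ (β j (f (m i)) * α i (g (n j))) := by simp only [hφ]
    _ = pseudotrace φ n β (f ∘ₗ g) := (pseudotrace_comp_eq_sum φ n β hmα f g).symm

theorem pseudotrace_independent_of_projective_basis_general (φ : P →+ A)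
    (hφ : ∀ p q, φ (p * q) = φ (q * p))
    {m : ι → M} {α : ι → M →ₗ[Pᵐᵒᵖ] P} (hmα : IsProjectiveBasis m α)
    {n : κ → M} {β : κ → M →ₗ[Pᵐᵒᵖ] P} (hnβ : IsProjectiveBasis n β)
    (T : M →ₗ[Pᵐᵒᵖ] M) :
    pseudotrace φ m α T = pseudotrace φ n β T :=
  pseudotrace_comp_comm φ hφ hmα hnβ LinearMap.id T

end Pseudotrace

/-- The pseudotrace `φ_M(T)` of a right `P`-module endomorphism `T` of `M` does not
depend on the choice of projective basis of `M`: if `((m_i), (α_i))` and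
`((n_j), (β_j))` are two projective bases of `M`, then
`φ(Σ_i α_i (T (m_i))) = φ(Σ_j β_j (T (n_j)))`.
Right `P`-modules are formalized as left modules over the opposite algebra `Pᵐᵒᵖ`. -/
theorem pseudotrace_independent_of_projective_basis
    (P : Type*) [Ring P] [Algebra ℂ P] [FiniteDimensional ℂ P]
    (φ : P →ₗ[ℂ] ℂ) (hφ : ∀ p q : P, φ (p * q) = φ (q * p))
    (M : Type*) [AddCommGroup M] [Module Pᵐᵒᵖ M]
    (s t : ℕ) (m : Fin s → M) (α : Fin s → (M →ₗ[Pᵐᵒᵖ] P))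
    (n : Fin t → M) (β : Fin t → (M →ₗ[Pᵐᵒᵖ] P))
    (hmα : ∀ x : M, x = ∑ i, op (α i x) • m i)
    (hnβ : ∀ x : M, x = ∑ j, op (β j x) • n j)
    (T : M →ₗ[Pᵐᵒᵖ] M) :
    φ (∑ i, α i (T (m i))) = φ (∑ j, β j (T (n j))) :=
  pseudotrace_independent_of_projective_basis_general φ.toAddMonoidHom hφ hmα hnβ T
end

section
/- Let m ≥ 1 be an integer, let τ ∈ ℍ, and let z ∈ ℂ satisfy 0 < Im z < Im τ (equivalently |q_τ| < |q_z| < 1; such a z lies off the lattice Λ_τ). Then ℘_m(z;τ) = (−1)^m·( P_m(q_z; q_τ) − D_m(z;τ) ), where D_m(z;τ) = ∂^{m−1}/∂z^{m−1}( G₂(τ)·z − πi ), i.e. D₁(z;τ) = G₂(τ)·z − πi, D₂(z;τ) = G₂(τ), and D_m(z;τ) = 0 for m ≥ 3. -/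
open Complex Real

/-- The lattice point `kτ + l` associated to `p = (k, l) ∈ ℤ²`. -/
noncomputable def latticePt (τ : ℂ) (p : ℤ × ℤ) : ℂ := (p.1 : ℂ) * τ + (p.2 : ℂ)

/-- The Weierstrass function `℘₁(z;τ)`. -/
noncomputable def wp1 (z τ : ℂ) : ℂ :=
  1 / z + ∑' p : {p : ℤ × ℤ // p ≠ (0, 0)},
    (1 / (z - latticePt τ p.1) + 1 / latticePt τ p.1 + z / (latticePt τ p.1) ^ 2)

/-- The Weierstrass function `℘₂(z;τ)`. -/
noncomputable def wp2 (z τ : ℂ) : ℂ :=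
  1 / z ^ 2 + ∑' p : {p : ℤ × ℤ // p ≠ (0, 0)},
    (1 / (z - latticePt τ p.1) ^ 2 - 1 / (latticePt τ p.1) ^ 2)

/-- The Weierstrass function `℘_m(z;τ)` for `m ≥ 3`. -/
noncomputable def wpHigh (m : ℕ) (z τ : ℂ) : ℂ :=
  ∑' p : ℤ × ℤ, 1 / (z - latticePt τ p) ^ m

/-- The Weierstrass function `℘_m(z;τ)`, `m ≥ 1`. -/
noncomputable def wp (m : ℕ) (z τ : ℂ) : ℂ :=
  if m = 1 then wp1 z τ else if m = 2 then wp2 z τ else wpHigh m z τ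

/-- The Eisenstein series `G_k(τ) = Σ_{(m,l) ≠ (0,0)} (mτ+l)^{-k}` (used for `k ≥ 3`). -/
noncomputable def Eis (k : ℕ) (τ : ℂ) : ℂ :=
  ∑' p : {p : ℤ × ℤ // p ≠ (0, 0)}, 1 / (latticePt τ p.1) ^ k

/-- The quasimodular Eisenstein series
`G₂(τ) = π²/3 + Σ_{m≠0} Σ_{l∈ℤ} (mτ+l)^{-2}` (iterated sum). -/
noncomputable def G2 (τ : ℂ) : ℂ :=
  (Real.pi : ℂ) ^ 2 / 3 +
    ∑' m : {m : ℤ // m ≠ 0}, ∑' l : ℤ, 1 / (((m : ℤ) : ℂ) * τ + (l : ℂ)) ^ 2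

/-- `q_z = e^{2πiz}`. -/
noncomputable def qexp (z : ℂ) : ℂ := Complex.exp (2 * Real.pi * Complex.I * z)

/-- The series `P_{m+1}(x;q) = (2πi)^{m+1} Σ_{l≥1} ( (l^m/m!)·x^l/(1−q^l)
− (−1)^m·(l^m/m!)·q^l·x^{−l}/(1−q^l) )`.  Note the index shift: `Pser m = P_{m+1}`. -/
noncomputable def Pser (m : ℕ) (x q : ℂ) : ℂ :=
  (2 * Real.pi * Complex.I) ^ (m + 1) *
    ∑' l : ℕ,
      ((((l + 1 : ℕ) : ℂ) ^ m / (Nat.factorial m : ℂ)) * x ^ (l + 1) / (1 - q ^ (l + 1)) -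
        (-1 : ℂ) ^ m * (((l + 1 : ℕ) : ℂ) ^ m / (Nat.factorial m : ℂ)) * q ^ (l + 1) *
          x ^ (-((l : ℤ) + 1)) / (1 - q ^ (l + 1)))

/-- `D_m(z;τ) = ∂^{m−1}/∂z^{m−1}( G₂(τ)·z − πi )`. -/
noncomputable def Dterm (m : ℕ) (z τ : ℂ) : ℂ :=
  if m = 1 then G2 τ * z - Real.pi * Complex.I else if m = 2 then G2 τ else 0

/-!
Sum over the lattice row by row. For `m ≥ 2`, Lipschitz's formula expands the row
`∑_l (z - kτ - l)^(-m)` as a series in `q^(-k) q_z` when `k ≤ 0` and in `q^k / q_z` when `k > 0`.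
For `m = 1`, the cotangent expansion gives the row the same kind of `q`-series with an extra
constant `∓πi`, while its convergence factors give a second cotangent at `kτ` and the row `k` of
`z G₂`. Summing geometric progressions over `k` turns the `q`-series into the two Lambert series
of `P_m`. The `q`-series of the second cotangents are odd in `k` and cancel, the constants `∓πi`
cancel outside the row `k = 0`, and what is left of the convergence factors is `D_m`.
-/

open Asymptotics Bornology Filter SummationFilter Topology
open scoped Nat

section LambertSeries

variable {𝕜 : Type*} [NormedField 𝕜] {a : ℕ → 𝕜} {q : 𝕜}

/-- The Lambert series `∑_{n ≥ 1} aₙ / (1 - qⁿ)`, where the coefficient `aₙ` is stored as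
`a (n - 1)`. -/
noncomputable def lambertSeries (a : ℕ → 𝕜) (q : 𝕜) : 𝕜 :=
  ∑' n, a n / (1 - q ^ (n + 1))

lemma hasSum_mul_geometric_pow_succ (hq : ‖q‖ < 1) (n : ℕ) :
    HasSum (fun j ↦ a n * (q ^ (n + 1)) ^ j) (a n / (1 - q ^ (n + 1))) := by
  have hqn : ‖q ^ (n + 1)‖ < 1 := by
    rw [norm_pow]
    exact pow_lt_one₀ (norm_nonneg q) hq n.succ_ne_zero
  simpa only [div_eq_mul_inv] using (hasSum_geometric_of_norm_lt_one hqn).mul_left (a n)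

variable [CompleteSpace 𝕜]

lemma summable_mul_geometric_pow_succ (ha : Summable (‖a ·‖)) (hq : ‖q‖ < 1) :
    Summable fun p : ℕ × ℕ ↦ a p.1 * (q ^ (p.1 + 1)) ^ p.2 := by
  have hmul := ha.mul_of_nonneg (summable_geometric_of_lt_one (norm_nonneg q) hq)
    (fun _ ↦ norm_nonneg _) (fun _ ↦ by positivity)
  refine .of_norm_bounded hmul fun p ↦ ?_
  rw [norm_mul, norm_pow, norm_pow]
  gcongr
  exact pow_le_of_le_one (norm_nonneg q) hq.le p.1.succ_ne_zero

lemma tsum_mul_geometric_pow_succ (ha : Summable (‖a ·‖)) (hq : ‖q‖ < 1) :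
    ∑' p : ℕ × ℕ, a p.1 * (q ^ (p.1 + 1)) ^ p.2 = lambertSeries a q := by
  rw [(summable_mul_geometric_pow_succ ha hq).tsum_prod, lambertSeries]
  exact tsum_congr fun n ↦ (hasSum_mul_geometric_pow_succ hq n).tsum_eq

lemma hasSum_lambertSeries (ha : Summable (‖a ·‖)) (hq : ‖q‖ < 1) :
    HasSum (fun n ↦ a n / (1 - q ^ (n + 1))) (lambertSeries a q) := by
  rw [← tsum_mul_geometric_pow_succ ha hq]
  exact (summable_mul_geometric_pow_succ ha hq).hasSum.prod_fiberwise
    (hasSum_mul_geometric_pow_succ hq)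

lemma hasSum_tsum_mul_pow_lambertSeries (ha : Summable (‖a ·‖)) (hq : ‖q‖ < 1) :
    HasSum (fun j ↦ ∑' n, a n * (q ^ (n + 1)) ^ j) (lambertSeries a q) := by
  have hsum := (summable_mul_geometric_pow_succ ha hq).prod_symm
  rw [← tsum_mul_geometric_pow_succ ha hq, ← (Equiv.prodComm ℕ ℕ).tsum_eq]
  exact hsum.hasSum.prod_fiberwise fun j ↦ (hsum.prod_factor j).hasSum

end LambertSeries

lemma apply_add_tsum_subtype_ne {ι E : Type*} [NormedAddCommGroup E] [CompleteSpace E]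
    {f : ι → E} (hf : Summable f) (i₀ : ι) :
    f i₀ + ∑' i : {i // i ≠ i₀}, f i = ∑' i, f i := by
  rw [← tsum_singleton i₀ f]
  exact hf.tsum_subtype_add_tsum_subtype_compl {i₀}

lemma sum_Icc_neg_natCast {M : Type*} [AddCommGroup M] (f : ℤ → M) (N : ℕ) :
    ∑ l ∈ Finset.Icc (-N : ℤ) N, f l = f 0 + ∑ j ∈ Finset.range N, (f (j + 1) + f (-(j + 1))) := by
  induction N with
  | zero => simp
  | succ N ih =>
    rw [Nat.cast_succ, Finset.sum_Icc_succ_eq_add_endpoints, ih, Finset.sum_range_succ]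
    abel

lemma hasSum_comp_neg_symmetricIcc {M : Type*} [AddCommGroup M] [TopologicalSpace M] {f : ℤ → M}
    {a : M} (hf : HasSum f a (symmetricIcc ℤ)) : HasSum (fun l ↦ f (-l)) a (symmetricIcc ℤ) := by
  rw [hasSum_symmetricIcc_iff] at hf ⊢
  simpa only [sum_Icc_neg_natCast, neg_zero, neg_neg, add_comm] using hf

section InverseAtInfinity

variable {𝕜 : Type*} [NormedField 𝕜] (z : 𝕜)

lemma isBigO_inv_const_sub :
    (fun w ↦ (z - w)⁻¹) =O[cobounded 𝕜] fun w ↦ w⁻¹ := by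
  have hsub : id =O[cobounded 𝕜] fun w ↦ z - w := by
    simpa using (isLittleO_const_id_cobounded z).right_isBigO_sub.neg_right
  refine hsub.inv_rev ?_
  filter_upwards [eventually_ne_cobounded 0] with w hw h
  exact absurd h hw

lemma isBigO_inv_const_sub_add_inv :
    (fun w ↦ (z - w)⁻¹ + w⁻¹) =O[cobounded 𝕜] fun w ↦ (w ^ 2)⁻¹ := by
  have hmul : (fun w ↦ z * ((z - w)⁻¹ * w⁻¹)) =O[cobounded 𝕜] fun w ↦ w⁻¹ * w⁻¹ :=
    ((isBigO_inv_const_sub z).mul (isBigO_refl _ _)).const_mul_left z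
  refine hmul.congr' ?_ (.of_forall fun w ↦ by simp [sq])
  filter_upwards [eventually_ne_cobounded 0, eventually_ne_cobounded z] with w hw hzw
  have hzw : z - w ≠ 0 := sub_ne_zero.mpr hzw.symm
  field_simp
  ring

lemma isBigO_inv_const_sub_sq_sub_inv_sq :
    (fun w ↦ ((z - w) ^ 2)⁻¹ - (w ^ 2)⁻¹) =O[cobounded 𝕜] fun w ↦ (w ^ 3)⁻¹ := by
  have hsub : (fun w ↦ (z - w)⁻¹ - w⁻¹) =O[cobounded 𝕜] fun w ↦ w⁻¹ :=
    (isBigO_inv_const_sub z).sub (isBigO_refl _ _)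
  refine ((isBigO_inv_const_sub_add_inv z).mul hsub).congr (fun w ↦ ?_) fun w ↦ by ring
  rw [← inv_pow, ← inv_pow, sq_sub_sq]

lemma isBigO_inv_const_sub_add_inv_add_div_sq :
    (fun w ↦ (z - w)⁻¹ + w⁻¹ + z / w ^ 2) =O[cobounded 𝕜] fun w ↦ (w ^ 3)⁻¹ := by
  have hmul : (fun w ↦ z * (w⁻¹ * ((z - w)⁻¹ + w⁻¹))) =O[cobounded 𝕜]
      fun w ↦ w⁻¹ * (w ^ 2)⁻¹ :=
    ((isBigO_refl _ _).mul (isBigO_inv_const_sub_add_inv z)).const_mul_left z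
  refine hmul.congr' ?_ (.of_forall fun w ↦ by ring)
  filter_upwards [eventually_ne_cobounded 0, eventually_ne_cobounded z] with w hw hzw
  have hzw : z - w ≠ 0 := sub_ne_zero.mpr hzw.symm
  field_simp
  ring

end InverseAtInfinity

section LatticeSums

variable {τ : ℂ} (hτ : 0 < τ.im) (z : ℂ)
include hτ

lemma tendsto_latticePt_cofinite_cobounded : Tendsto (latticePt τ) cofinite (cobounded ℂ) := by
  rw [← tendsto_norm_atTop_iff_cobounded]
  have hnorm : Tendsto (fun p : ℤ × ℤ ↦ ‖p‖) cofinite atTop := by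
    simpa only [cocompact_eq_cofinite] using tendsto_norm_cocompact_atTop (E := ℤ × ℤ)
  refine tendsto_atTop_mono' cofinite ?_ (hnorm.const_mul_atTop (EisensteinSeries.r_pos ⟨τ, hτ⟩))
  filter_upwards [(Set.finite_singleton (0 : ℤ × ℤ)).compl_mem_cofinite] with p hp
  have hp' : ![p.1, p.2] ≠ 0 := fun h ↦
    hp (Prod.ext (by simpa using congrFun h 0) (by simpa using congrFun h 1))
  simpa [latticePt, EisensteinSeries.norm_eq_max_natAbs, Prod.norm_def, Int.norm_eq_abs]
    using EisensteinSeries.r_mul_max_le ⟨τ, hτ⟩ hp'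

lemma summable_comp_latticePt {E : Type*} [NormedAddCommGroup E] [CompleteSpace E] {f : ℂ → E}
    {m : ℕ} (hm : 3 ≤ m) (hf : f =O[cobounded ℂ] fun w ↦ (w ^ m)⁻¹) :
    Summable fun p ↦ f (latticePt τ p) := by
  have hpow : Summable fun p ↦ ‖(latticePt τ p ^ m)⁻¹‖ := by
    refine (summable_prod_eisSummand hm ⟨τ, hτ⟩).norm.congr fun p ↦ ?_
    simp [EisensteinSeries.eisSummand, latticePt]
  exact summable_of_isBigO hpow
    (hf.comp_tendsto (tendsto_latticePt_cofinite_cobounded hτ)).norm_right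

lemma summable_wp1 : Summable fun p ↦
    1 / (z - latticePt τ p) + 1 / latticePt τ p + z / latticePt τ p ^ 2 := by
  simpa only [one_div] using
    summable_comp_latticePt hτ le_rfl (isBigO_inv_const_sub_add_inv_add_div_sq z)

lemma summable_wp2 : Summable fun p ↦
    1 / (z - latticePt τ p) ^ 2 - 1 / latticePt τ p ^ 2 := by
  simpa only [one_div] using
    summable_comp_latticePt hτ le_rfl (isBigO_inv_const_sub_sq_sub_inv_sq z)

lemma summable_wpHigh {m : ℕ} (hm : 3 ≤ m) : Summable fun p ↦ 1 / (z - latticePt τ p) ^ m := by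
  refine summable_comp_latticePt (f := fun w ↦ 1 / (z - w) ^ m) hτ hm ?_
  simpa only [one_div, inv_pow] using (isBigO_inv_const_sub z).pow m

lemma wp1_eq_tsum_tsum : wp1 z τ = ∑' k : ℤ, ∑' l : ℤ,
    (1 / (z - latticePt τ (k, l)) + 1 / latticePt τ (k, l) + z / latticePt τ (k, l) ^ 2) := by
  rw [← (summable_wp1 hτ z).tsum_prod, ← apply_add_tsum_subtype_ne (summable_wp1 hτ z) (0, 0)]
  simp [wp1, latticePt]

lemma wp2_eq_tsum_tsum : wp2 z τ = ∑' k : ℤ, ∑' l : ℤ,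
    (1 / (z - latticePt τ (k, l)) ^ 2 - 1 / latticePt τ (k, l) ^ 2) := by
  rw [← (summable_wp2 hτ z).tsum_prod, ← apply_add_tsum_subtype_ne (summable_wp2 hτ z) (0, 0)]
  simp [wp2, latticePt]

end LatticeSums

lemma norm_qexp_lt_one {w : ℂ} (hw : 0 < w.im) : ‖qexp w‖ < 1 :=
  UpperHalfPlane.norm_exp_two_pi_I_lt_one ⟨w, hw⟩

lemma qexp_add (z w : ℂ) : qexp (z + w) = qexp z * qexp w := by
  rw [qexp, mul_add, Complex.exp_add, qexp, qexp]

lemma qexp_sub (z w : ℂ) : qexp (z - w) = qexp z / qexp w := by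
  rw [qexp, mul_sub, Complex.exp_sub, qexp, qexp]

lemma qexp_nat_mul (n : ℕ) (z : ℂ) : qexp (n * z) = qexp z ^ n := by
  rw [qexp, mul_left_comm, Complex.exp_nat_mul, qexp]

section LipschitzSeries

/-- The term `(2πi)^(s+1) / s! · n^s q_wⁿ` of Lipschitz's formula, where the index `n ≥ 1` is
shifted to `n - 1`. -/
noncomputable def lipschitzTerm (s : ℕ) (w : ℂ) (n : ℕ) : ℂ :=
  (2 * π * I) ^ (s + 1) / s ! * (n + 1 : ℕ) ^ s * qexp w ^ (n + 1)

/-- The `q`-series `(2πi)^(s+1) / s! · ∑_{n ≥ 1} n^s q_wⁿ` of Lipschitz's formula. -/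
noncomputable def lipschitzSeries (s : ℕ) (w : ℂ) : ℂ := ∑' n, lipschitzTerm s w n

/-- The row sum `∑_l (w - l)^(-s-1)` with its limits at `±i∞` removed, expanded in `q_w` on the
upper and in `q_w⁻¹` on the lower half-plane. On the real axis it is given the value `0`, which
keeps it even or odd in `w`. -/
noncomputable def lipschitzTail (s : ℕ) (w : ℂ) : ℂ :=
  if 0 < w.im then (-1) ^ (s + 1) * lipschitzSeries s w
  else if w.im < 0 then lipschitzSeries s (-w) else 0

variable (s : ℕ) {w z τ : ℂ}

lemma lipschitzTail_of_im_pos (hw : 0 < w.im) :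
    lipschitzTail s w = (-1) ^ (s + 1) * lipschitzSeries s w :=
  if_pos hw

lemma lipschitzTail_of_im_neg (hw : w.im < 0) : lipschitzTail s w = lipschitzSeries s (-w) := by
  rw [lipschitzTail, if_neg hw.not_gt, if_pos hw]

lemma lipschitzTail_of_im_eq_zero (hw : w.im = 0) : lipschitzTail s w = 0 := by
  simp [lipschitzTail, hw]

lemma lipschitzTail_neg (w : ℂ) : lipschitzTail s (-w) = (-1) ^ (s + 1) * lipschitzTail s w := by
  rcases lt_trichotomy w.im 0 with hw | hw | hw
  · rw [lipschitzTail_of_im_neg s hw, lipschitzTail_of_im_pos s (by simpa using hw)]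
  · rw [lipschitzTail_of_im_eq_zero s hw, lipschitzTail_of_im_eq_zero s (by simpa using hw),
      mul_zero]
  · rw [lipschitzTail_of_im_pos s hw, lipschitzTail_of_im_neg s (by simpa using hw), neg_neg,
      ← mul_assoc, ← mul_pow, neg_one_mul, neg_neg, one_pow, one_mul]

lemma summable_norm_lipschitzTerm (hw : 0 < w.im) : Summable (‖lipschitzTerm s w ·‖) := by
  have hpow := summable_norm_pow_mul_geometric_of_norm_lt_one s (norm_qexp_lt_one hw)
  simpa only [lipschitzTerm, mul_assoc, norm_mul] using
    ((summable_nat_add_iff 1).mpr hpow).mul_left ‖(2 * π * I) ^ (s + 1) / (s ! : ℂ)‖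

lemma hasSum_lipschitzSeries_add_nat_mul (hw : 0 < w.im) (hτ : 0 < τ.im) :
    HasSum (fun j : ℕ ↦ lipschitzSeries s (w + j * τ))
      (lambertSeries (lipschitzTerm s w) (qexp τ)) := by
  refine (hasSum_tsum_mul_pow_lambertSeries (summable_norm_lipschitzTerm s hw)
    (norm_qexp_lt_one hτ)).congr_fun fun j ↦ tsum_congr fun n ↦ ?_
  rw [lipschitzTerm, lipschitzTerm, qexp_add, qexp_nat_mul]
  ring

lemma Pser_qexp_eq_lambertSeries (hz : 0 < z.im) (hzτ : z.im < τ.im) :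
    Pser s (qexp z) (qexp τ) = lambertSeries (lipschitzTerm s z) (qexp τ) -
      (-1) ^ s * lambertSeries (lipschitzTerm s (τ - z)) (qexp τ) := by
  have hq := norm_qexp_lt_one (hz.trans hzτ)
  have hτz : 0 < (τ - z).im := by simpa using hzτ
  have hdiff := (hasSum_lambertSeries (summable_norm_lipschitzTerm s hz) hq).sub
    ((hasSum_lambertSeries (summable_norm_lipschitzTerm s hτz) hq).mul_left ((-1) ^ s))
  rw [← hdiff.tsum_eq, Pser, ← tsum_mul_left]
  refine tsum_congr fun n ↦ ?_
  rw [lipschitzTerm, lipschitzTerm, qexp_sub, div_pow, zpow_neg]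
  norm_cast
  ring

lemma im_add_nat_mul_pos (hw : 0 < w.im) (hτ : 0 < τ.im) (j : ℕ) : 0 < (w + j * τ).im := by
  simp only [add_im, mul_im, natCast_re, natCast_im, zero_mul, add_zero]
  positivity

lemma hasSum_lipschitzTail_sub_int_mul (hz : 0 < z.im) (hzτ : z.im < τ.im) :
    HasSum (fun k : ℤ ↦ lipschitzTail s (z - k * τ))
      ((-1) ^ (s + 1) * Pser s (qexp z) (qexp τ)) := by
  have hτ : 0 < τ.im := hz.trans hzτ
  have hτz : 0 < (τ - z).im := by simpa using hzτ
  have hnonpos : HasSum (fun j : ℕ ↦ lipschitzTail s (z + j * τ))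
      ((-1) ^ (s + 1) * lambertSeries (lipschitzTerm s z) (qexp τ)) :=
    ((hasSum_lipschitzSeries_add_nat_mul s hz hτ).mul_left _).congr_fun fun j ↦
      lipschitzTail_of_im_pos s (im_add_nat_mul_pos hz hτ j)
  have hpos : HasSum (fun j : ℕ ↦ lipschitzTail s (-(τ - z + j * τ)))
      (lambertSeries (lipschitzTerm s (τ - z)) (qexp τ)) :=
    (hasSum_lipschitzSeries_add_nat_mul s hτz hτ).congr_fun fun j ↦ by
      rw [lipschitzTail_of_im_neg s, neg_neg]
      simpa only [neg_im, neg_lt_zero] using im_add_nat_mul_pos hτz hτ j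
  have hvalue : (-1) ^ (s + 1) * Pser s (qexp z) (qexp τ) =
      (-1) ^ (s + 1) * lambertSeries (lipschitzTerm s z) (qexp τ) +
        lambertSeries (lipschitzTerm s (τ - z)) (qexp τ) := by
    rw [Pser_qexp_eq_lambertSeries s hz hzτ]
    rcases neg_one_pow_eq_or ℂ s with h | h <;> rw [pow_succ, h] <;> ring
  rw [← (Equiv.neg ℤ).hasSum_iff, hvalue]
  refine .of_nat_of_neg_add_one (hnonpos.congr_fun fun j ↦ ?_) (hpos.congr_fun fun j ↦ ?_) <;>
  · simp only [Function.comp_apply, Equiv.neg_apply]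
    push_cast; ring_nf

lemma summable_lipschitzTail_int_mul (hτ : 0 < τ.im) :
    Summable fun k : ℤ ↦ lipschitzTail s (k * τ) := by
  have hnat : Summable fun j : ℕ ↦ lipschitzTail s ((j : ℤ) * τ) := by
    rw [← summable_nat_add_iff 1]
    refine ((hasSum_lipschitzSeries_add_nat_mul s hτ hτ).summable.mul_left
      ((-1) ^ (s + 1))).congr fun j ↦ ?_
    rw [← lipschitzTail_of_im_pos s (im_add_nat_mul_pos hτ hτ j)]
    push_cast; ring_nf
  refine .of_nat_of_neg hnat ((hnat.mul_left ((-1) ^ (s + 1))).congr fun j ↦ ?_)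
  rw [← lipschitzTail_neg]
  push_cast; ring_nf

end LipschitzSeries

section Rows

variable {s : ℕ} {w z τ : ℂ}

lemma tsum_one_div_add_int_pow_of_im_pos (hs : 1 ≤ s) (hw : 0 < w.im) :
    ∑' l : ℤ, 1 / (w + l) ^ (s + 1) = (-1) ^ (s + 1) * lipschitzSeries s w := by
  have hid := EisensteinSeries.qExpansion_identity_pnat hs ⟨w, hw⟩
  rw [tsum_pnat_eq_tsum_succ (f := fun n : ℕ ↦ (n : ℂ) ^ s * cexp (2 * π * I * w) ^ n),
    ← tsum_mul_left] at hid
  rw [hid, lipschitzSeries, ← tsum_mul_left]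
  refine tsum_congr fun n ↦ ?_
  rw [lipschitzTerm, qexp, neg_mul, neg_mul, neg_pow]
  ring

lemma tsum_one_div_add_int_pow (hs : 1 ≤ s) (hw : w.im ≠ 0) :
    ∑' l : ℤ, 1 / (w + l) ^ (s + 1) = lipschitzTail s w := by
  rcases hw.lt_or_gt with hneg | hpos
  · have hw' : 0 < (-w).im := by simpa using hneg
    rw [← neg_neg w, lipschitzTail_neg, lipschitzTail_of_im_pos s hw',
      ← tsum_one_div_add_int_pow_of_im_pos hs hw', ← tsum_mul_left, ← tsum_comp_neg]
    refine tsum_congr fun l ↦ ?_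
    rw [Int.cast_neg, ← neg_add, neg_pow]
    rcases neg_one_pow_eq_or ℂ (s + 1) with h | h <;> rw [h] <;> simp
  · rw [lipschitzTail_of_im_pos s hpos, tsum_one_div_add_int_pow_of_im_pos hs hpos]

lemma tsum_one_div_sub_latticePt_pow (hs : 1 ≤ s) {k : ℤ} (hk : (z - k * τ).im ≠ 0) :
    ∑' l : ℤ, 1 / (z - latticePt τ (k, l)) ^ (s + 1) = lipschitzTail s (z - k * τ) := by
  rw [← tsum_one_div_add_int_pow hs hk, ← tsum_comp_neg]
  refine tsum_congr fun l ↦ ?_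
  simp only [latticePt, Int.cast_neg, ← sub_sub, sub_neg_eq_add]

lemma tsum_one_div_int_sq : ∑' l : ℤ, 1 / (l : ℂ) ^ 2 = (π : ℂ) ^ 2 / 3 := by
  have hzeta := two_mul_riemannZeta_eq_tsum_int_inv_pow_of_even (k := 2) le_rfl even_two
  simp only [one_div]
  rw [← hzeta, Nat.cast_ofNat, riemannZeta_two]
  ring

lemma hasSum_G2 (hτ : 0 < τ.im) :
    HasSum (fun k : ℤ ↦ ∑' l : ℤ, 1 / latticePt τ (k, l) ^ 2) (G2 τ) := by
  have hsum : Summable fun k : ℤ ↦ ∑' l : ℤ, 1 / latticePt τ (k, l) ^ 2 := by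
    refine (summable_lipschitzTail_int_mul 1 hτ).congr_cofinite ?_
    filter_upwards [(Set.finite_singleton (0 : ℤ)).compl_mem_cofinite] with k hk
    have him : ((k : ℂ) * τ).im ≠ 0 := by simpa [hτ.ne'] using hk
    exact (tsum_one_div_add_int_pow le_rfl him).symm
  have hG2 : G2 τ = ∑' k : ℤ, ∑' l : ℤ, 1 / latticePt τ (k, l) ^ 2 := by
    rw [← apply_add_tsum_subtype_ne hsum 0, G2, ← tsum_one_div_int_sq]
    simp [latticePt]
  exact hG2 ▸ hsum.hasSum

-- At `w = 0` both sides vanish, since `1 / 0 = 0` and `cot 0 = 0` here.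
lemma hasSum_symmetricIcc_one_div_add_int (hw : w = 0 ∨ w ∈ integerComplement) :
    HasSum (fun l : ℤ ↦ 1 / (w + l)) (π * cot (π * w)) (symmetricIcc ℤ) := by
  have hcot : Tendsto (fun N : ℕ ↦ ∑ j ∈ Finset.range N, cotTerm w j) atTop
      (𝓝 (π * cot (π * w) - 1 / w)) := by
    rcases hw with rfl | hw
    · have hterm (j : ℕ) : cotTerm 0 j = 0 := by
        rw [cotTerm, zero_sub, zero_add, div_neg, neg_add_cancel]
      simp [Complex.cot, hterm]
    · exact tendsto_logDeriv_euler_cot_sub hw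
  rw [hasSum_symmetricIcc_iff]
  simp only [sum_Icc_neg_natCast]
  simpa [cotTerm, sub_eq_add_neg, add_comm] using hcot.const_add (1 / w)

lemma mem_integerComplement_of_im_ne_zero (hw : w.im ≠ 0) : w ∈ integerComplement := by
  rintro ⟨n, rfl⟩
  exact hw (intCast_im n)

lemma summable_one_div_add_int_sq (a : ℂ) : Summable fun l : ℤ ↦ 1 / (a + l) ^ 2 := by
  refine (EisensteinSeries.linear_right_summable a 1 (k := 2) le_rfl).congr fun l ↦ ?_
  norm_cast
  simp

lemma tsum_wp1_row {a : ℂ} (ha : a = 0 ∨ a ∈ integerComplement)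
    (hza : z - a ∈ integerComplement)
    (hrow : Summable fun l : ℤ ↦ 1 / (z - (a + l)) + 1 / (a + l) + z / (a + l) ^ 2) :
    ∑' l : ℤ, (1 / (z - (a + l)) + 1 / (a + l) + z / (a + l) ^ 2) =
      π * cot (π * (z - a)) + π * cot (π * a) + z * ∑' l : ℤ, 1 / (a + l) ^ 2 := by
  have hsq := (summable_one_div_add_int_sq a).mul_left z
  have hcot : HasSum (fun l : ℤ ↦ 1 / (z - (a + l)) + 1 / (a + l))
      (π * cot (π * (z - a)) + π * cot (π * a)) (symmetricIcc ℤ) :=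
    ((hasSum_comp_neg_symmetricIcc (hasSum_symmetricIcc_one_div_add_int (.inr hza))).add
      (hasSum_symmetricIcc_one_div_add_int ha)).congr_fun fun l ↦ by push_cast; ring_nf
  have hfst : Summable fun l : ℤ ↦ 1 / (z - (a + l)) + 1 / (a + l) :=
    (hrow.sub hsq).congr fun l ↦ by ring
  rw [← tsum_mul_left, ← hcot.tsum_eq, tsum_eq_of_summable_unconditional hfst,
    ← hfst.tsum_add hsq]
  simp only [mul_one_div]

lemma pi_mul_cot_of_im_pos (hw : 0 < w.im) :
    π * cot (π * w) = lipschitzTail 0 w - π * I := by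
  have hcot := pi_mul_cot_pi_q_exp ⟨w, hw⟩
  change _ = _ - _ * ∑' n : ℕ, qexp w ^ n at hcot
  have hgeom := summable_geometric_of_norm_lt_one (norm_qexp_lt_one hw)
  rw [hgeom.tsum_eq_zero_add] at hcot
  rw [lipschitzTail_of_im_pos 0 hw, lipschitzSeries]
  simp only [lipschitzTerm, pow_zero, mul_one, tsum_mul_left, zero_add, pow_one,
    Nat.factorial_zero, Nat.cast_one, div_one]
  linear_combination hcot

lemma pi_mul_cot_of_im_neg (hw : w.im < 0) :
    π * cot (π * w) = lipschitzTail 0 w + π * I := by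
  have hcot := pi_mul_cot_of_im_pos (w := -w) (by simpa using hw)
  have hodd : cot (π * -w) = -cot (π * w) := by simp [Complex.cot, neg_div', div_neg]
  rw [hodd, lipschitzTail_neg] at hcot
  linear_combination -hcot

lemma im_sub_int_mul_pos {k : ℤ} (hk : k ≤ 0) (hz : 0 < z.im) (hτ : 0 < τ.im) :
    0 < (z - k * τ).im := by
  have hk' : (k : ℝ) ≤ 0 := mod_cast hk
  simp only [sub_im, mul_im, intCast_re, intCast_im, zero_mul, add_zero]
  nlinarith

lemma im_sub_int_mul_neg {k : ℤ} (hk : 0 < k) (hτ : 0 < τ.im) (hzτ : z.im < τ.im) :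
    (z - k * τ).im < 0 := by
  have hk' : (1 : ℝ) ≤ k := mod_cast hk
  simp only [sub_im, mul_im, intCast_re, intCast_im, zero_mul, add_zero]
  nlinarith

lemma im_sub_int_mul_ne_zero (k : ℤ) (hz : 0 < z.im) (hzτ : z.im < τ.im) :
    (z - k * τ).im ≠ 0 := by
  have hτ := hz.trans hzτ
  rcases le_or_gt k 0 with hk | hk
  · exact (im_sub_int_mul_pos hk hz hτ).ne'
  · exact (im_sub_int_mul_neg hk hτ hzτ).ne

-- The constants `∓πi` of the two cotangents cancel except for `k = 0`, where `cot 0 = 0`.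
lemma pi_mul_cot_sub_add_pi_mul_cot (k : ℤ) (hz : 0 < z.im) (hzτ : z.im < τ.im) :
    π * cot (π * (z - k * τ)) + π * cot (π * (k * τ)) =
      lipschitzTail 0 (z - k * τ) + lipschitzTail 0 (k * τ) + if k = 0 then -(π * I) else 0 := by
  have hτ := hz.trans hzτ
  have him : ((k : ℂ) * τ).im = k * τ.im := by simp
  rcases lt_trichotomy k 0 with hk | rfl | hk
  · rw [pi_mul_cot_of_im_pos (im_sub_int_mul_pos hk.le hz hτ), pi_mul_cot_of_im_neg, if_neg hk.ne]
    · ring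
    · exact him ▸ mul_neg_of_neg_of_pos (mod_cast hk) hτ
  · rw [pi_mul_cot_of_im_pos (im_sub_int_mul_pos le_rfl hz hτ), if_pos rfl,
      lipschitzTail_of_im_eq_zero 0 (w := (0 : ℤ) * τ) (by simp)]
    simp [Complex.cot, sub_eq_add_neg]
  · rw [pi_mul_cot_of_im_neg (im_sub_int_mul_neg hk hτ hzτ), pi_mul_cot_of_im_pos, if_neg hk.ne']
    · ring
    · exact him ▸ mul_pos (mod_cast hk) hτ

lemma tsum_lipschitzTail_zero_int_mul (τ : ℂ) : ∑' k : ℤ, lipschitzTail 0 (k * τ) = 0 := by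
  have hodd : ∑' k : ℤ, lipschitzTail 0 (k * τ) = -∑' k : ℤ, lipschitzTail 0 (k * τ) := by
    rw [← tsum_neg, ← tsum_comp_neg]
    refine tsum_congr fun k ↦ ?_
    rw [Int.cast_neg, neg_mul, lipschitzTail_neg, zero_add, pow_one, neg_one_mul]
  exact self_eq_neg.mp hodd

end Rows

section Evaluation

variable {z τ : ℂ}

lemma wp1_eq_Pser_zero (hz : 0 < z.im) (hzτ : z.im < τ.im) :
    wp1 z τ = -(Pser 0 (qexp z) (qexp τ) - (G2 τ * z - π * I)) := by
  have hτ : 0 < τ.im := hz.trans hzτ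
  have hrow (k : ℤ) : ∑' l : ℤ, (1 / (z - latticePt τ (k, l)) + 1 / latticePt τ (k, l) +
        z / latticePt τ (k, l) ^ 2) =
      lipschitzTail 0 (z - k * τ) + lipschitzTail 0 (k * τ) + (if k = 0 then -(π * I) else 0) +
        z * ∑' l : ℤ, 1 / latticePt τ (k, l) ^ 2 := by
    have hk : (k : ℂ) * τ = 0 ∨ (k : ℂ) * τ ∈ integerComplement := by
      rcases eq_or_ne k 0 with rfl | hk
      · simp
      · exact .inr (mem_integerComplement_of_im_ne_zero (by simp [hk, hτ.ne']))
    rw [← pi_mul_cot_sub_add_pi_mul_cot k hz hzτ]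
    simp only [latticePt]
    exact tsum_wp1_row hk
      (mem_integerComplement_of_im_ne_zero (im_sub_int_mul_ne_zero k hz hzτ))
      (by simpa only [latticePt] using (summable_wp1 hτ z).prod_factor k)
  have htail : HasSum (fun k : ℤ ↦ lipschitzTail 0 (k * τ)) 0 :=
    tsum_lipschitzTail_zero_int_mul τ ▸ (summable_lipschitzTail_int_mul 0 hτ).hasSum
  have hsum := (((hasSum_lipschitzTail_sub_int_mul 0 hz hzτ).add htail).add
    (hasSum_ite_eq 0 (-(π * I)))).add ((hasSum_G2 hτ).mul_left z)
  rw [wp1_eq_tsum_tsum hτ, (hsum.congr_fun hrow).tsum_eq]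
  ring

lemma hasSum_tsum_one_div_sub_latticePt_pow {s : ℕ} (hs : 1 ≤ s) (hz : 0 < z.im)
    (hzτ : z.im < τ.im) :
    HasSum (fun k : ℤ ↦ ∑' l : ℤ, 1 / (z - latticePt τ (k, l)) ^ (s + 1))
      ((-1) ^ (s + 1) * Pser s (qexp z) (qexp τ)) :=
  (hasSum_lipschitzTail_sub_int_mul s hz hzτ).congr_fun fun k ↦
    tsum_one_div_sub_latticePt_pow hs (im_sub_int_mul_ne_zero k hz hzτ)

lemma wp2_eq_Pser_one (hz : 0 < z.im) (hzτ : z.im < τ.im) :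
    wp2 z τ = Pser 1 (qexp z) (qexp τ) - G2 τ := by
  have hτ : 0 < τ.im := hz.trans hzτ
  have hrow (k : ℤ) : ∑' l : ℤ, (1 / (z - latticePt τ (k, l)) ^ 2 - 1 / latticePt τ (k, l) ^ 2) =
      ∑' l : ℤ, 1 / (z - latticePt τ (k, l)) ^ 2 - ∑' l : ℤ, 1 / latticePt τ (k, l) ^ 2 := by
    have hsq : Summable fun l : ℤ ↦ 1 / latticePt τ (k, l) ^ 2 :=
      summable_one_div_add_int_sq (k * τ)
    refine Summable.tsum_sub ?_ hsq
    simpa only [sub_add_cancel] using ((summable_wp2 hτ z).prod_factor k).add hsq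
  have hsum := (hasSum_tsum_one_div_sub_latticePt_pow le_rfl hz hzτ).sub (hasSum_G2 hτ)
  rw [wp2_eq_tsum_tsum hτ, (hsum.congr_fun hrow).tsum_eq]
  ring

lemma wpHigh_eq_Pser {s : ℕ} (hs : 2 ≤ s) (hz : 0 < z.im) (hzτ : z.im < τ.im) :
    wpHigh (s + 1) z τ = (-1) ^ (s + 1) * Pser s (qexp z) (qexp τ) := by
  rw [wpHigh, (summable_wpHigh (hz.trans hzτ) z (by lia)).tsum_prod]
  exact (hasSum_tsum_one_div_sub_latticePt_pow (by lia) hz hzτ).tsum_eq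

end Evaluation

/-- For `m ≥ 1`, `τ ∈ ℍ`, and `z` with `0 < Im z < Im τ`:
`℘_m(z;τ) = (−1)^m·( P_m(q_z; q_τ) − D_m(z;τ) )`. -/
theorem wp_eq_Pseries (m : ℕ) (hm : 1 ≤ m) (τ z : ℂ) (hτ : 0 < τ.im)
    (hz1 : 0 < z.im) (hz2 : z.im < τ.im) :
    wp m z τ = (-1 : ℂ) ^ m * (Pser (m - 1) (qexp z) (qexp τ) - Dterm m z τ) := by
  obtain ⟨s, rfl⟩ : ∃ s, m = s + 1 := ⟨m - 1, by lia⟩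
  rcases s with _ | _ | s
  · simpa [wp, Dterm] using wp1_eq_Pser_zero hz1 hz2
  · simpa [wp, Dterm] using wp2_eq_Pser_one hz1 hz2
  · simpa [wp, Dterm] using wpHigh_eq_Pser (s := s + 2) (by lia) hz1 hz2
end

section
/- Let m ≥ 1 be an integer, let g = (A B; C D) ∈ SL₂(ℤ), let τ ∈ ℍ, and let z ∈ ℂ ∖ Λ_τ. Then (Cτ+D)^{−m}·℘_m( z/(Cτ+D) ; (Aτ+B)/(Cτ+D) ) = ℘_m(z;τ). -/
open Complex Real

/-!
As a function of the lattice `Λ_τ`, `℘_m` is homogeneous of degree `-m`: multiplying `z` and `Λ_τ`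
by the same `c ≠ 0` multiplies it by `c ^ (-m)`. For `τ' = (Aτ + B) / (Cτ + D)` the generators of
`(Cτ + D) Λ_τ'` are `Aτ + B` and `Cτ + D`, which form another basis of `Λ_τ`, so the case
`c = Cτ + D` of homogeneity is modular invariance.
-/

open scoped MatrixGroups Pointwise

lemma tsum_smul_set₀ {G₀ α M : Type*} [GroupWithZero G₀] [MulAction G₀ α] [AddCommMonoid M]
    [TopologicalSpace M] {c : G₀} (hc : c ≠ 0) (s : Set α) (f : α → M) :
    ∑' x : ↥(c • s), f x = ∑' x : s, f (c • (x : α)) := by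
  rw [← Set.image_smul, tsum_image f (MulAction.injective₀ hc).injOn]

lemma tsum_range_diff_singleton {α β M : Type*} [AddCommMonoid M] [TopologicalSpace M] {e : α → β}
    (he : Function.Injective e) (a : α) (f : β → M) :
    ∑' y : ↥(Set.range e \ {e a}), f y = ∑' x : {x // x ≠ a}, f (e x) := by
  have himage : Set.range e \ {e a} = e '' {x | x ≠ a} := by
    rw [← Set.image_univ, ← Set.image_singleton, ← Set.image_sdiff he, ← Set.compl_eq_univ_sdiff,
      Set.compl_singleton_eq]
  rw [himage]
  exact tsum_image f he.injOn

/-- The contribution of a lattice point `ω ≠ 0` to `℘_m(z; Λ)`: the function `(z - ω) ^ (-m)`,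
minus, for `m = 1, 2`, its Taylor polynomial at `z = 0` of degree `2 - m`. -/
noncomputable def wpTerm (m : ℕ) (z ω : ℂ) : ℂ :=
  if m = 1 then 1 / (z - ω) + 1 / ω + z / ω ^ 2
  else if m = 2 then 1 / (z - ω) ^ 2 - 1 / ω ^ 2
  else 1 / (z - ω) ^ m

lemma wpTerm_mul_mul {c : ℂ} (hc : c ≠ 0) (m : ℕ) (z ω : ℂ) :
    wpTerm m (c * z) (c * ω) = c ^ (-(m : ℤ)) * wpTerm m z ω := by
  rw [zpow_neg, zpow_natCast]
  unfold wpTerm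
  rw [← mul_sub]
  split_ifs with h₁ h₂
  · subst h₁
    field_simp
  · subst h₂
    field_simp
  · rw [mul_pow]
    field_simp

/-- The Weierstrass function `℘_m(z; Λ)`, depending on the lattice `Λ` only as a set of points.
For `m ≤ 2` the point `0 ∈ Λ` contributes `1 / z ^ m`, without a correction term. -/
noncomputable def wpLattice (m : ℕ) (z : ℂ) (Λ : Set ℂ) : ℂ :=
  if 3 ≤ m then ∑' ω : Λ, wpTerm m z ω else 1 / z ^ m + ∑' ω : ↥(Λ \ {0}), wpTerm m z ω

lemma tsum_smul_set_wpTerm {c : ℂ} (hc : c ≠ 0) (m : ℕ) (z : ℂ) (s : Set ℂ) :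
    ∑' ω : ↥(c • s), wpTerm m (c * z) ω = c ^ (-(m : ℤ)) * ∑' ω : s, wpTerm m z ω := by
  simp only [tsum_smul_set₀ hc s (wpTerm m (c * z)), smul_eq_mul, wpTerm_mul_mul hc, tsum_mul_left]

theorem wpLattice_mul_smul_set {c : ℂ} (hc : c ≠ 0) (m : ℕ) (z : ℂ) (Λ : Set ℂ) :
    wpLattice m (c * z) (c • Λ) = c ^ (-(m : ℤ)) * wpLattice m z Λ := by
  have hdiff : c • Λ \ {0} = c • (Λ \ {0}) := by
    rw [Set.smul_set_sdiff₀ hc, Set.smul_set_singleton, smul_zero]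
  have hpole : 1 / (c * z) ^ m = c ^ (-(m : ℤ)) * (1 / z ^ m) := by
    rw [zpow_neg, zpow_natCast, mul_pow, one_div, one_div, mul_inv]
  unfold wpLattice
  split_ifs
  · exact tsum_smul_set_wpTerm hc m z Λ
  · rw [hdiff, tsum_smul_set_wpTerm hc, hpole, mul_add]

lemma latticePt_zero (τ : ℂ) : latticePt τ (0, 0) = 0 := by
  simp [latticePt]

lemma latticePt_injective {τ : ℂ} (hτ : τ.im ≠ 0) : Function.Injective (latticePt τ) := by
  intro p q h
  have him : p.1 = q.1 := by simpa [latticePt, hτ] using congrArg Complex.im h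
  have hre : p.2 = q.2 := by simpa [latticePt, him] using congrArg Complex.re h
  exact Prod.ext him hre

theorem wp_eq_wpLattice {m : ℕ} (hm : 1 ≤ m) {τ : ℂ} (hτ : Function.Injective (latticePt τ))
    (z : ℂ) : wp m z τ = wpLattice m z (Set.range (latticePt τ)) := by
  have hne := tsum_range_diff_singleton hτ (0, 0) (wpTerm m z)
  rw [latticePt_zero] at hne
  rw [wpLattice, tsum_range (wpTerm m z) hτ, hne]
  obtain rfl | rfl | hm₃ : m = 1 ∨ m = 2 ∨ 3 ≤ m := by lia
  · simp [wp, wp1, wpTerm]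
  · simp [wp, wp2, wpTerm]
  · have h₁ : m ≠ 1 := by lia
    have h₂ : m ≠ 2 := by lia
    simp [wp, wpHigh, wpTerm, hm₃, h₁, h₂]

/-- The action `(k, l) ↦ (k, l) g` of an invertible matrix on row vectors. -/
def rowMulEquiv {R : Type*} [CommRing R] (g : GL (Fin 2) R) : (R × R) ≃ₗ[R] R × R :=
  (LinearEquiv.finTwoArrow R R).symm ≪≫ₗ
    Matrix.toLinearEquivRight'OfInv g.inv_mul g.mul_inv ≪≫ₗ LinearEquiv.finTwoArrow R R

lemma rowMulEquiv_apply {R : Type*} [CommRing R] (g : GL (Fin 2) R) (p : R × R) :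
    rowMulEquiv g p = (p.1 * g 0 0 + p.2 * g 1 0, p.1 * g 0 1 + p.2 * g 1 1) := by
  simp [rowMulEquiv, Matrix.vecMul, dotProduct]

/-- The automorphy factor `Cτ + D` of `g = (A B; C D)`. Mathlib's `UpperHalfPlane.denom` is the
analogue for real matrices. -/
noncomputable def moebiusDenom (g : GL (Fin 2) ℤ) (τ : ℂ) : ℂ := (g 1 0 : ℤ) * τ + (g 1 1 : ℤ)

/-- The Möbius transform `(Aτ + B) / (Cτ + D)` of `τ` by `g = (A B; C D)`, with junk value `0` when
`Cτ + D = 0`. It is defined on all of `ℂ`, so that no half-plane has to be chosen. -/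
noncomputable def moebius (g : GL (Fin 2) ℤ) (τ : ℂ) : ℂ :=
  ((g 0 0 : ℤ) * τ + (g 0 1 : ℤ)) / moebiusDenom g τ

section ChangeOfBasis

variable (g : GL (Fin 2) ℤ) {τ : ℂ}

lemma moebiusDenom_ne_zero (hτ : Function.Injective (latticePt τ)) : moebiusDenom g τ ≠ 0 := by
  have hrow : latticePt τ (rowMulEquiv g (0, 1)) ≠ latticePt τ 0 := hτ.ne (by simp)
  simpa [latticePt, rowMulEquiv_apply, moebiusDenom] using hrow

lemma moebiusDenom_mul_latticePt_moebius (hj : moebiusDenom g τ ≠ 0) (p : ℤ × ℤ) :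
    moebiusDenom g τ * latticePt (moebius g τ) p = latticePt τ (rowMulEquiv g p) := by
  have hnum : moebiusDenom g τ * moebius g τ = (g 0 0 : ℤ) * τ + (g 0 1 : ℤ) :=
    mul_div_cancel₀ _ hj
  calc moebiusDenom g τ * latticePt (moebius g τ) p
    _ = p.1 * (moebiusDenom g τ * moebius g τ) + p.2 * moebiusDenom g τ := by
      rw [latticePt]
      ring
    _ = latticePt τ (rowMulEquiv g p) := by
      rw [hnum, moebiusDenom, latticePt, rowMulEquiv_apply]
      push_cast
      ring

lemma moebiusDenom_smul_range_latticePt_moebius (hj : moebiusDenom g τ ≠ 0) :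
    moebiusDenom g τ • Set.range (latticePt (moebius g τ)) = Set.range (latticePt τ) := by
  simp only [Set.smul_set_range, smul_eq_mul, moebiusDenom_mul_latticePt_moebius g hj]
  exact (rowMulEquiv g).surjective.range_comp (latticePt τ)

lemma latticePt_moebius_injective (hτ : Function.Injective (latticePt τ)) :
    Function.Injective (latticePt (moebius g τ)) := by
  intro p q hpq
  apply hτ.comp (rowMulEquiv g).injective
  simp only [Function.comp_apply,
    ← moebiusDenom_mul_latticePt_moebius g (moebiusDenom_ne_zero g hτ), hpq]

end ChangeOfBasis

theorem wp_modular_invariance_general (m : ℕ) (hm : 1 ≤ m) (g : GL (Fin 2) ℤ) (τ z : ℂ)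
    (hτ : τ.im ≠ 0) (_hz : ∀ p : ℤ × ℤ, z ≠ latticePt τ p) :
    moebiusDenom g τ ^ (-(m : ℤ)) * wp m (z / moebiusDenom g τ) (moebius g τ) = wp m z τ := by
  have hinj := latticePt_injective hτ
  have hj := moebiusDenom_ne_zero g hinj
  rw [wp_eq_wpLattice hm (latticePt_moebius_injective g hinj), ← wpLattice_mul_smul_set hj,
    moebiusDenom_smul_range_latticePt_moebius g hj, mul_div_cancel₀ z hj,
    ← wp_eq_wpLattice hm hinj]

/-- Modular invariance of `℘_m`: for `m ≥ 1`, `g = (A B; C D) ∈ SL₂(ℤ)`, `τ ∈ ℍ` and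
`z ∉ Λ_τ`, `(Cτ+D)^{−m}·℘_m( z/(Cτ+D) ; (Aτ+B)/(Cτ+D) ) = ℘_m(z;τ)`. -/
theorem wp_modular_invariance (m : ℕ) (hm : 1 ≤ m)
    (g : Matrix.SpecialLinearGroup (Fin 2) ℤ) (τ z : ℂ) (hτ : 0 < τ.im)
    (hz : ∀ p : ℤ × ℤ, z ≠ latticePt τ p) :
    ((g 1 0 : ℤ) * τ + (g 1 1 : ℤ)) ^ (-(m : ℤ)) *
      wp m (z / ((g 1 0 : ℤ) * τ + (g 1 1 : ℤ)))
        (((g 0 0 : ℤ) * τ + (g 0 1 : ℤ)) / ((g 1 0 : ℤ) * τ + (g 1 1 : ℤ))) =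
      wp m z τ :=
  wp_modular_invariance_general m hm g τ z hτ.ne' hz
end

section
/- For every τ ∈ ℍ and every z ∈ ℂ ∖ Λ_τ, ℘₁(z+1;τ) = ℘₁(z;τ) + G₂(τ). -/
open Complex Real

/-! Writing `w = c + l` with `c = kτ`, the increment of the `w`-th summand of `℘₁` under `z ↦ z + 1`
is `(1 / (z + 1 - w) - 1 / (z - w)) + 1 / w ^ 2`. The double series of increments converges
absolutely, so it may be summed along the rows `k = const`. In each row the bracket telescopes to
zero, and what remains is the iterated series of `G₂`, whose row `k = 0` is `2 ζ(2) = π² / 3`. -/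

open Filter Topology SummationFilter

lemma tsum_eq_add_tsum_ne {α G : Type*} [AddCommGroup G] [TopologicalSpace G]
    [IsTopologicalAddGroup G] [T2Space G] {f : α → G} (hf : Summable f) (a : α) :
    ∑' x, f x = f a + ∑' x : {x // x ≠ a}, f x := by
  rw [← hf.sum_add_tsum_compl (s := {a}), Finset.sum_singleton, Finset.coe_singleton]
  rfl

lemma hasSum_symmetricIco_int_sub {G : Type*} [AddCommGroup G] [TopologicalSpace G]
    [IsTopologicalAddGroup G] {g : ℤ → G} {a b : G}
    (hbot : Tendsto (fun N : ℕ ↦ g (-N)) atTop (𝓝 a))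
    (htop : Tendsto (fun N : ℕ ↦ g N) atTop (𝓝 b)) :
    HasSum (fun l ↦ g l - g (l + 1)) (a - b) (symmetricIco ℤ) := by
  simpa only [hasSum_symmetricIco_int_iff, Finset.sum_Ico_int_sub] using hbot.sub htop

lemma hasSum_symmetricIco_one_div_sub_intCast (u : ℂ) :
    HasSum (fun l : ℤ ↦ 1 / (u - l) - 1 / (u - (l + 1))) 0 (symmetricIco ℤ) := by
  have htop : Tendsto (fun N : ℕ ↦ 1 / (u - (N : ℤ))) atTop (𝓝 0) := by
    simpa using EisensteinSeries.tendsto_zero_inv_linear_sub u 1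
  have hbot : Tendsto (fun N : ℕ ↦ 1 / (u - (-N : ℤ))) atTop (𝓝 0) := by
    simpa using EisensteinSeries.tendsto_zero_inv_linear u 1
  simpa using hasSum_symmetricIco_int_sub (g := fun l : ℤ ↦ 1 / (u - l)) hbot htop

lemma summable_int_one_div_add_sq (c : ℂ) : Summable fun l : ℤ ↦ 1 / (c + l) ^ 2 := by
  simpa [zpow_ofNat] using EisensteinSeries.linear_right_summable c 1 (k := 2) le_rfl

lemma tsum_int_one_div_sq : ∑' l : ℤ, 1 / (l : ℂ) ^ 2 = (Real.pi : ℂ) ^ 2 / 3 := by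
  have h := two_mul_riemannZeta_eq_tsum_int_inv_pow_of_even (k := 2) le_rfl even_two
  simp only [one_div, ← h, Nat.cast_ofNat, riemannZeta_two]
  ring

/-- The term of a lattice point `w` in the series of the Weierstrass zeta function, of which `wp1`
is the instance for the lattice `ℤτ + ℤ`. Division by zero gives `1 / z` at `w = 0`, so that the
leading term `1 / z` of `wp1` is the term of the origin. -/
noncomputable def weierstrassZetaTerm (z w : ℂ) : ℂ :=
  1 / (z - w) + 1 / w + z / w ^ 2

lemma weierstrassZetaTerm_eq_div {z w : ℂ} (hw : w ≠ 0) (hzw : z ≠ w) :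
    weierstrassZetaTerm z w = z ^ 2 / (w ^ 2 * (z - w)) := by
  have : z - w ≠ 0 := sub_ne_zero.mpr hzw
  unfold weierstrassZetaTerm
  field

lemma norm_weierstrassZetaTerm_le {z w : ℂ} (hw : w ≠ 0) (hzw : 2 * ‖z‖ ≤ ‖w‖) :
    ‖weierstrassZetaTerm z w‖ ≤ 2 * ‖z‖ ^ 2 * ‖w‖⁻¹ ^ 3 := by
  have hw_pos : 0 < ‖w‖ := norm_pos_iff.mpr hw
  have hdist : ‖w‖ / 2 ≤ ‖z - w‖ := by
    linarith [norm_sub_norm_le w z, norm_sub_rev w z]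
  have hne : z ≠ w := sub_ne_zero.mp (norm_pos_iff.mp (by linarith))
  calc ‖weierstrassZetaTerm z w‖
      = ‖z‖ ^ 2 / (‖w‖ ^ 2 * ‖z - w‖) := by simp [weierstrassZetaTerm_eq_div hw hne]
    _ ≤ ‖z‖ ^ 2 / (‖w‖ ^ 2 * (‖w‖ / 2)) := by gcongr
    _ = 2 * ‖z‖ ^ 2 * ‖w‖⁻¹ ^ 3 := by field

lemma summable_weierstrassZetaTerm (L : PeriodPair) (z : ℂ) :
    Summable fun w : L.lattice ↦ weierstrassZetaTerm z w := by
  have hcube : Summable fun w : L.lattice ↦ ‖w‖⁻¹ ^ 3 :=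
    ZLattice.summable_norm_pow_inv L.lattice 3 (by simp)
  have hlarge : ∀ᶠ w : L.lattice in cofinite, 2 * ‖z‖ + 1 ≤ ‖w‖ := by
    rw [← cocompact_eq_cofinite]
    exact tendsto_norm_cocompact_atTop.eventually_ge_atTop _
  refine .of_norm_bounded_eventually (hcube.mul_left (2 * ‖z‖ ^ 2)) ?_
  filter_upwards [hlarge] with w hw
  refine norm_weierstrassZetaTerm_le (norm_pos_iff.mp ?_) ?_ <;>
    linarith [norm_nonneg z, Submodule.norm_coe w]

lemma weierstrassZetaTerm_add_sub (z a w : ℂ) :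
    weierstrassZetaTerm (z + a) w - weierstrassZetaTerm z w =
      (1 / (z + a - w) - 1 / (z - w)) + a / w ^ 2 := by
  unfold weierstrassZetaTerm
  ring

lemma hasSum_symmetricIco_weierstrassZetaTerm_add_one_sub (z c : ℂ) :
    HasSum (fun l : ℤ ↦ weierstrassZetaTerm (z + 1) (c + l) - weierstrassZetaTerm z (c + l))
      (∑' l : ℤ, 1 / (c + l) ^ 2) (symmetricIco ℤ) := by
  have hsq : HasSum (fun l : ℤ ↦ 1 / (c + l) ^ 2) (∑' l : ℤ, 1 / (c + l) ^ 2) (symmetricIco ℤ) :=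
    (summable_int_one_div_add_sq c).hasSum.mono_left (symmetricIco ℤ).le_atTop
  rw [← zero_add (∑' l : ℤ, _)]
  refine ((hasSum_symmetricIco_one_div_sub_intCast (z + 1 - c)).add hsq).congr_fun fun l ↦ ?_
  rw [weierstrassZetaTerm_add_sub]
  ring_nf

/-- The period pair `(τ, 1)`, through which Mathlib's theory of period lattices applies to the
points `latticePt τ p`. -/
noncomputable def periodPairOne {τ : ℂ} (hτ : τ.im ≠ 0) : PeriodPair where
  ω₁ := τ
  ω₂ := 1
  indep := LinearIndependent.pair_iff.mpr fun s t h ↦ by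
    have hs : s = 0 := by simpa [hτ] using congrArg Complex.im h
    exact ⟨hs, by simpa [hs] using congrArg Complex.re h⟩

lemma summable_weierstrassZetaTerm_latticePt {τ : ℂ} (hτ : τ.im ≠ 0) (z : ℂ) :
    Summable fun p ↦ weierstrassZetaTerm z (latticePt τ p) := by
  have h := (periodPairOne hτ).latticeEquivProd.symm.toEquiv.summable_iff.mpr
    (summable_weierstrassZetaTerm (periodPairOne hτ) z)
  refine h.congr fun p ↦ ?_
  have hp : ((periodPairOne hτ).latticeEquivProd.symm p : ℂ) = latticePt τ p := by
    rw [PeriodPair.latticeEquiv_symm_apply]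
    simp [latticePt, periodPairOne]
  exact congrArg (weierstrassZetaTerm z) hp

lemma wp1_eq_tsum_weierstrassZetaTerm {τ : ℂ} (hτ : τ.im ≠ 0) (z : ℂ) :
    wp1 z τ = ∑' p, weierstrassZetaTerm z (latticePt τ p) := by
  rw [tsum_eq_add_tsum_ne (summable_weierstrassZetaTerm_latticePt hτ z) (0, 0)]
  simp [wp1, weierstrassZetaTerm, latticePt]

lemma hasSum_tsum_one_div_sq_wp1_sub {τ : ℂ} (hτ : τ.im ≠ 0) (z : ℂ) :
    HasSum (fun k : ℤ ↦ ∑' l : ℤ, 1 / ((k : ℂ) * τ + l) ^ 2) (wp1 (z + 1) τ - wp1 z τ) := by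
  have hdiff := (summable_weierstrassZetaTerm_latticePt hτ (z + 1)).hasSum.sub
    (summable_weierstrassZetaTerm_latticePt hτ z).hasSum
  rw [← wp1_eq_tsum_weierstrassZetaTerm hτ, ← wp1_eq_tsum_weierstrassZetaTerm hτ] at hdiff
  refine hdiff.prod_fiberwise fun k ↦ ?_
  have hrow : Summable fun l : ℤ ↦
      weierstrassZetaTerm (z + 1) (k * τ + l) - weierstrassZetaTerm z (k * τ + l) :=
    hdiff.summable.prod_factor k
  rw [← (hasSum_symmetricIco_weierstrassZetaTerm_add_one_sub z (k * τ)).tsum_eq,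
    tsum_eq_of_summable_unconditional hrow]
  exact hrow.hasSum

lemma G2_eq_tsum_tsum {τ : ℂ}
    (h : Summable fun k : ℤ ↦ ∑' l : ℤ, 1 / ((k : ℂ) * τ + l) ^ 2) :
    G2 τ = ∑' k : ℤ, ∑' l : ℤ, 1 / ((k : ℂ) * τ + l) ^ 2 := by
  rw [tsum_eq_add_tsum_ne h 0, G2, ← tsum_int_one_div_sq]
  simp

theorem wp1_quasiperiodic_one_general (τ z : ℂ) (hτ : τ.im ≠ 0)
    (hz : ∀ p : ℤ × ℤ, z ≠ latticePt τ p) :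
    wp1 (z + 1) τ = wp1 z τ + G2 τ := by
  have h := hasSum_tsum_one_div_sq_wp1_sub hτ z
  rw [G2_eq_tsum_tsum h.summable, h.tsum_eq, add_sub_cancel]

/-- Quasi-periodicity of `℘₁` in the direction `1`:
`℘₁(z+1;τ) = ℘₁(z;τ) + G₂(τ)`. -/
theorem wp1_quasiperiodic_one (τ z : ℂ) (hτ : 0 < τ.im)
    (hz : ∀ p : ℤ × ℤ, z ≠ latticePt τ p) :
    wp1 (z + 1) τ = wp1 z τ + G2 τ :=
  wp1_quasiperiodic_one_general τ z hτ.ne' hz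
end

section
/- For every g = (A B; C D) ∈ SL₂(ℤ) and every τ ∈ ℍ, G₂( (Aτ+B)/(Cτ+D) ) = (Cτ+D)²·G₂(τ) − 2πi·C·(Cτ+D). -/
open Complex Real

/-!
The anomaly `-2πi C (Cτ + D)` arises because the double series `∑ (mτ + l)⁻²` converges only
conditionally. Mathlib proves the transformation law for the outer sum taken over symmetric
intervals, so it remains to see that this outer sum converges unconditionally: its row `m = 0` may
then be split off as `2ζ(2) = π²/3`. For `m ≠ 0`, the terms of row `m` differ from
`((mτ + l)² (mτ + l + 1))⁻¹` by terms that telescope to zero, and the double series of the latter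
converges absolutely.
-/

open EisensteinSeries (e2Summand eisSummand)
open UpperHalfPlane (denom denom_ne_zero)
open scoped UpperHalfPlane MatrixGroups

lemma one_div_sq_eq_one_div_sq_mul_add_one_add {K : Type*} [Field K] {x : K} (hx : x ≠ 0)
    (hx' : x + 1 ≠ 0) : 1 / x ^ 2 = 1 / (x ^ 2 * (x + 1)) + (1 / x - 1 / (x + 1)) := by
  field_simp
  ring

/-- The general term `1 / ((mz + n)² (mz + n + 1))` of the absolutely convergent double series that
is compared with the conditionally convergent `∑ (mz + n)⁻²`. At `(m, n) = (0, 0)` and `(0, -1)`,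
where the denominator vanishes, the term is `0`. -/
noncomputable def cubicSummand (z : ℂ) (m n : ℤ) : ℂ :=
  1 / ((m * z + n) ^ 2 * (m * z + n + 1))

section RowSums

variable (z : ℍ)

lemma summable_cubicSummand : Summable fun p : ℤ × ℤ ↦ cubicSummand z p.1 p.2 := by
  have summable_pairs : Summable fun v : Fin 2 → ℤ ↦ cubicSummand z (v 0) (v 1) := by
    apply EisensteinSeries.summable_of_isBigO_rpow_norm (a := 3) (by norm_num)
    have linear_isBigO := EisensteinSeries.isBigO_linear_add_const_vec z 0
    simpa [cubicSummand, pow_three, pow_two, ← mul_assoc] using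
      ((linear_isBigO 1).mul (linear_isBigO 0)).mul (linear_isBigO 0)
  exact (finTwoArrowEquiv ℤ).symm.summable_iff.mpr summable_pairs

lemma tsum_one_div_linear_sub_one_div_linear_succ (m : ℤ) :
    ∑' n : ℤ, (1 / ((m : ℂ) * z + n) - 1 / (m * z + n + 1)) = 0 := by
  rw [← tsum_eq_of_summable_unconditional (L := SummationFilter.symmetricIco ℤ)
      (EisensteinSeries.summable_right_one_div_linear_sub_one_div_linear_succ z m),
    EisensteinSeries.tsum_symmetricIco_linear_sub_linear_add_one_eq_zero]

lemma e2Summand_eq_tsum_one_div_sq (m : ℤ) :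
    e2Summand m z = ∑' n : ℤ, 1 / ((m : ℂ) * z + n) ^ 2 := by
  simp [e2Summand, eisSummand, zpow_ofNat]

lemma e2Summand_eq_tsum_cubicSummand {m : ℤ} (hm : m ≠ 0) :
    e2Summand m z = ∑' n : ℤ, cubicSummand z m n := by
  have linear_ne_zero (n : ℤ) : (m : ℂ) * z + n ≠ 0 := by
    simpa using UpperHalfPlane.linear_ne_zero (cd := ![(m : ℝ), n]) z (by simp [hm])
  have linear_succ_ne_zero (n : ℤ) : (m : ℂ) * z + n + 1 ≠ 0 := by
    simpa [add_assoc] using linear_ne_zero (n + 1)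
  calc e2Summand m z
      = ∑' n : ℤ, (cubicSummand z m n + (1 / ((m : ℂ) * z + n) - 1 / (m * z + n + 1))) := by
        rw [e2Summand_eq_tsum_one_div_sq]
        exact tsum_congr fun n ↦
          one_div_sq_eq_one_div_sq_mul_add_one_add (linear_ne_zero n) (linear_succ_ne_zero n)
    _ = ∑' n : ℤ, cubicSummand z m n := by
        rw [((summable_cubicSummand z).prod_factor m).tsum_add
            (EisensteinSeries.summable_right_one_div_linear_sub_one_div_linear_succ z m),
          tsum_one_div_linear_sub_one_div_linear_succ, add_zero]

lemma summable_e2Summand : Summable (e2Summand · z) := by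
  refine (summable_cubicSummand z).prod.congr_cofinite ?_
  filter_upwards [Filter.eventually_cofinite_ne (0 : ℤ)] with m hm
  exact (e2Summand_eq_tsum_cubicSummand z hm).symm

lemma eisensteinSeries_G2_eq_tsum_e2Summand :
    EisensteinSeries.G2 z = ∑' m : ℤ, e2Summand m z :=
  tsum_eq_of_summable_unconditional (summable_e2Summand z)

end RowSums

lemma G2_coe_upperHalfPlane (z : ℍ) : G2 z = EisensteinSeries.G2 z :=
  calc G2 z = e2Summand 0 z + ∑' m : {m : ℤ // m ≠ 0}, e2Summand m z := by
        rw [G2, EisensteinSeries.e2Summand_zero_eq_two_riemannZeta_two, riemannZeta_two]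
        simp only [e2Summand_eq_tsum_one_div_sq]
        ring
    _ = ∑' m : ℤ, e2Summand m z := by
        rw [← (summable_e2Summand z).tsum_subtype_add_tsum_subtype_compl {0},
          tsum_singleton (f := (e2Summand · z))]
        rfl
    _ = EisensteinSeries.G2 z := (eisensteinSeries_G2_eq_tsum_e2Summand z).symm

lemma eisensteinSeries_G2_smul (g : SL(2, ℤ)) (z : ℍ) :
    EisensteinSeries.G2 (g • z) =
      denom g z ^ 2 * EisensteinSeries.G2 z - 2 * π * I * g 1 0 * denom g z := by
  have hdenom : denom g z ≠ 0 := denom_ne_zero g z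
  have hslash := congrFun (EisensteinSeries.G2_slash_action g) z
  rw [ModularForm.SL_slash_apply, Pi.sub_apply, EisensteinSeries.D2, zpow_neg, zpow_ofNat] at hslash
  field_simp at hslash
  linear_combination hslash

/-- Quasimodular transformation of `G₂`: for `g = (A B; C D) ∈ SL₂(ℤ)` and `τ ∈ ℍ`,
`G₂((Aτ+B)/(Cτ+D)) = (Cτ+D)²·G₂(τ) − 2πi·C·(Cτ+D)`. -/
theorem G2_modular_transformation (g : Matrix.SpecialLinearGroup (Fin 2) ℤ)
    (τ : ℂ) (hτ : 0 < τ.im) :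
    G2 (((g 0 0 : ℤ) * τ + (g 0 1 : ℤ)) / ((g 1 0 : ℤ) * τ + (g 1 1 : ℤ))) =
      ((g 1 0 : ℤ) * τ + (g 1 1 : ℤ)) ^ 2 * G2 τ -
        2 * Real.pi * Complex.I * (g 1 0 : ℤ) * ((g 1 0 : ℤ) * τ + (g 1 1 : ℤ)) := by
  lift τ to ℍ using hτ
  have hdenom : denom g τ = (g 1 0 : ℤ) * (τ : ℂ) + (g 1 1 : ℤ) := ModularGroup.denom_apply g τ
  have hsmul : ((g • τ : ℍ) : ℂ) = ((g 0 0 : ℤ) * τ + (g 0 1 : ℤ)) / denom g τ := by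
    rw [hdenom]
    exact UpperHalfPlane.coe_specialLinearGroup_apply g τ
  rw [← hdenom, ← hsmul, G2_coe_upperHalfPlane, G2_coe_upperHalfPlane, eisensteinSeries_G2_smul]
end
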